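/- There is a universal constant C > 0 such that the following holds. Let u_1, ..., u_m be column vectors in ℂ^d such that Σ_{i=1}^m u_i u_i* = I and ‖u_i‖² ≤ ε for all i, and let t ∈ [0,1]. Then there exists a set of indices S ⊆ {1, ..., m} such that ‖Σ_{i ∈ S} u_i u_i* − t I‖ ≤ C √ε. -/

import Mathlib

/-- The outer product `u u*` of a vector `u ∈ ℂ^d` with itself, as a `d × d` matrix. -/
noncomputable def outer {d : ℕ} (u : EuclideanSpace ℂ (Fin d)) :
    Matrix (Fin d) (Fin d) ℂ :=
  Matrix.of fun i j => u i * starRingEnd ℂ (u j)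

/-- The operator norm of a matrix, acting on Euclidean space. -/
noncomputable def opNorm {d : ℕ} (A : Matrix (Fin d) (Fin d) ℂ) : ℝ :=
  ‖Matrix.toEuclideanCLM (𝕜 := ℂ) A‖

/-!
Let `D(z) = det (∑ zᵢ uᵢuᵢ*)` and apply the operators `1 - ∂/∂zᵢ - ∂/∂wᵢ` one after the other to
`D(z) D(w)`. Each of them may be paid for by raising `zᵢ` and `wᵢ` by `δ` without increasing the
barriers `∂ₖf / f`, since the barriers are decreasing and convex on the orthant above the roots;
starting where they are small, the final function is positive above the point with all coordinates
`(1 + √(2ε))²`.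

Now undo the operators. For multi-affine `f` and `α + β = 1`,
`(1 - ∂ᵢ - ∂ⱼ) f (p) = α f (p - eᵢ / α) + β f (p - eⱼ / β)`,
so positivity at `p` passes to one of the two shifted points. With `α = t` and `β = 1 - t`, the
choices made define `S`, and the outcome bounds the eigenvalues of `∑_{i ∈ S} uᵢuᵢ*` by
`t + (1 + √(2ε))² - 1` and those of the complementary sum by `1 - t + (1 + √(2ε))² - 1`.
-/

section MultiAffine

variable {κ R : Type*} [DecidableEq κ] [CommRing R]

/-- The difference of `F` along the unit step in coordinate `i`. On multi-affine functions, the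
only ones considered here, it is the partial derivative `∂F/∂zᵢ`. -/
def partialDiff (i : κ) (F : (κ → R) → R) (z : κ → R) : R :=
  F (z + Pi.single i 1) - F z

/-- A function which is affine in each variable separately. -/
def MultiAffine (F : (κ → R) → R) : Prop :=
  ∀ z i s, F (z + Pi.single i s) = F z + s * partialDiff i F z

/-- The operator `1 - ∂ᵢ - ∂ⱼ` which drives the barrier argument. -/
def oneSubPartials (i j : κ) (F : (κ → R) → R) (z : κ → R) : R :=
  F z - partialDiff i F z - partialDiff j F z

theorem partialDiff_comm (i j : κ) (F : (κ → R) → R) (z : κ → R) :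
    partialDiff i (partialDiff j F) z = partialDiff j (partialDiff i F) z := by
  simp only [partialDiff, add_right_comm z (Pi.single i 1)]
  ring

theorem partialDiff_oneSubPartials (i j k : κ) (F : (κ → R) → R) (z : κ → R) :
    partialDiff k (oneSubPartials i j F) z = partialDiff k F z -
      partialDiff k (partialDiff i F) z - partialDiff k (partialDiff j F) z := by
  simp only [oneSubPartials, partialDiff]
  ring

namespace MultiAffine

variable {F : (κ → R) → R}

protected theorem partialDiff (hF : MultiAffine F) (i : κ) : MultiAffine (partialDiff i F) := by
  intro z j s
  rw [partialDiff_comm]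
  simp only [partialDiff, add_right_comm z (Pi.single j s), hF _ j s]
  ring

theorem partialDiff_self (hF : MultiAffine F) (i : κ) (z : κ → R) :
    partialDiff i (partialDiff i F) z = 0 := by
  have h := hF z i (1 + 1)
  rw [Pi.single_add, ← add_assoc] at h
  simp only [partialDiff] at h ⊢
  rw [h]
  ring

protected theorem oneSubPartials (hF : MultiAffine F) (i j : κ) :
    MultiAffine (oneSubPartials i j F) := by
  intro z k s
  rw [partialDiff_oneSubPartials]
  simp only [oneSubPartials, hF z, hF.partialDiff _ z]
  ring

end MultiAffine

end MultiAffine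

section SumMul

variable {ι κ R : Type*} [DecidableEq ι] [DecidableEq κ] [CommRing R]

/-- The product of `F` and `G` in disjoint sets of variables. -/
def sumMul {ι κ : Type*} (F : (ι → R) → R) (G : (κ → R) → R) (z : ι ⊕ κ → R) : R :=
  F (z ∘ Sum.inl) * G (z ∘ Sum.inr)

variable (F : (ι → R) → R) (G : (κ → R) → R) (z : ι ⊕ κ → R) (s : R)

theorem sumMul_add_single_inl (i : ι) :
    sumMul F G (z + Pi.single (Sum.inl i) s) =
      F (z ∘ Sum.inl + Pi.single i s) * G (z ∘ Sum.inr) := by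
  rw [sumMul]
  congr 2 <;> ext k <;> simp [Pi.single_apply]

theorem sumMul_add_single_inr (k : κ) :
    sumMul F G (z + Pi.single (Sum.inr k) s) =
      F (z ∘ Sum.inl) * G (z ∘ Sum.inr + Pi.single k s) := by
  rw [sumMul]
  congr 2 <;> ext k <;> simp [Pi.single_apply]

theorem partialDiff_sumMul_inl (i : ι) :
    partialDiff (Sum.inl i) (sumMul F G) z =
      partialDiff i F (z ∘ Sum.inl) * G (z ∘ Sum.inr) := by
  rw [partialDiff, sumMul_add_single_inl, sumMul, partialDiff, sub_mul]

theorem partialDiff_sumMul_inr (k : κ) :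
    partialDiff (Sum.inr k) (sumMul F G) z =
      F (z ∘ Sum.inl) * partialDiff k G (z ∘ Sum.inr) := by
  rw [partialDiff, sumMul_add_single_inr, sumMul, partialDiff, mul_sub]

variable {F G}

protected theorem MultiAffine.sumMul (hF : MultiAffine F) (hG : MultiAffine G) :
    MultiAffine (sumMul F G) := by
  rintro z (i | k) s
  · rw [sumMul_add_single_inl, hF, partialDiff_sumMul_inl, sumMul]
    ring
  · rw [sumMul_add_single_inr, hG, partialDiff_sumMul_inr, sumMul]
    ring

end SumMul

section RealStable

variable {κ : Type*} [DecidableEq κ]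

/-- The inclusion of real points into complex ones. -/
def complexify {κ : Type*} (a : κ → ℝ) (k : κ) : ℂ := a k

/-- `F` is a multi-affine extension of `f` to complex arguments without zeros in the product of
open upper half planes. -/
structure IsStableExtension (F : (κ → ℂ) → ℂ) (f : (κ → ℝ) → ℝ) : Prop where
  multiAffine : MultiAffine F
  continuous : Continuous F
  apply_complexify (a : κ → ℝ) : F (complexify a) = f a
  apply_ne_zero {z : κ → ℂ} (hz : ∀ i, 0 < (z i).im) : F z ≠ 0

/-- Real stability of a multi-affine function, as a property of its extension to complex
arguments. -/
def RealStable (f : (κ → ℝ) → ℝ) : Prop := ∃ F, IsStableExtension F f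

/-- The Rayleigh difference `∂ᵢf ∂ⱼf - f ∂ᵢ∂ⱼf`, which is the numerator of `-∂ⱼ(∂ᵢf / f)`. -/
def rayleighDiff (i j : κ) (f : (κ → ℝ) → ℝ) (x : κ → ℝ) : ℝ :=
  partialDiff i f x * partialDiff j f x - f x * partialDiff i (partialDiff j f) x

/-- Strongly Rayleigh functions: Brändén's characterization of real stability of multi-affine
polynomials in terms of their values at real arguments. -/
structure StronglyRayleigh (f : (κ → ℝ) → ℝ) : Prop where
  multiAffine : MultiAffine f
  rayleighDiff_nonneg (i j : κ) (x : κ → ℝ) : 0 ≤ rayleighDiff i j f x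

theorem complexify_add_single (a : κ → ℝ) (i : κ) (s : ℝ) :
    complexify (a + Pi.single i s) = complexify a + Pi.single i (s : ℂ) := by
  ext k
  rcases eq_or_ne k i with rfl | hk
  · simp [complexify]
  · simp [complexify, hk]

theorem partialDiff_complexify {F : (κ → ℂ) → ℂ} {f : (κ → ℝ) → ℝ}
    (h : ∀ a, F (complexify a) = f a) (i : κ) (a : κ → ℝ) :
    partialDiff i F (complexify a) = partialDiff i f a := by
  have hadd : complexify a + Pi.single i 1 = complexify (a + Pi.single i 1) := by
    simp [complexify_add_single]
  simp only [partialDiff, hadd, h, Complex.ofReal_sub]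

theorem continuous_partialDiff {F : (κ → ℂ) → ℂ} (hF : Continuous F) (i : κ) :
    Continuous (partialDiff i F) := by
  unfold partialDiff
  fun_prop

namespace IsStableExtension

variable {F : (κ → ℂ) → ℂ} {f : (κ → ℝ) → ℝ}

-- In the direction `i`, `F` vanishes after the step `-F / ∂ᵢF`, which must leave the half plane.
theorem im_div_neg (h : IsStableExtension F f) {i : κ} {z : κ → ℂ} (hz : ∀ k, 0 < (z k).im)
    (hi : partialDiff i F z ≠ 0) : (partialDiff i F z / F z).im < 0 := by
  have hzero : F (z + Pi.single i (-(F z / partialDiff i F z))) = 0 := by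
    rw [h.multiAffine, neg_mul, div_mul_cancel₀ _ hi, add_neg_cancel]
  have him : 0 < (F z / partialDiff i F z).im := by
    by_contra! hle
    refine h.apply_ne_zero (fun k => ?_) hzero
    rcases eq_or_ne k i with rfl | hk
    · simpa using add_pos_of_pos_of_nonneg (hz k) (neg_nonneg.2 hle)
    · simpa [Pi.single_eq_of_ne hk] using hz k
  rw [← inv_div, Complex.inv_im]
  exact div_neg_of_neg_of_pos (neg_neg_of_pos him)
    (Complex.normSq_pos.2 (div_ne_zero (h.apply_ne_zero hz) hi))

theorem im_div_nonpos (h : IsStableExtension F f) (i : κ) {z : κ → ℂ}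
    (hz : ∀ k, 0 < (z k).im) : (partialDiff i F z / F z).im ≤ 0 := by
  by_cases hi : partialDiff i F z = 0
  · simp [hi]
  · exact (h.im_div_neg hz hi).le

protected theorem oneSubPartials (h : IsStableExtension F f) (i j : κ) :
    IsStableExtension (oneSubPartials i j F) (oneSubPartials i j f) where
  multiAffine := h.multiAffine.oneSubPartials i j
  continuous := (h.continuous.sub (continuous_partialDiff h.continuous i)).sub
    (continuous_partialDiff h.continuous j)
  apply_complexify a := by
    simp only [oneSubPartials, partialDiff_complexify h.apply_complexify,
      h.apply_complexify, Complex.ofReal_sub]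
  apply_ne_zero {z} hz hzero := by
    have hF := h.apply_ne_zero hz
    have hsum : partialDiff i F z / F z + partialDiff j F z / F z = 1 := by
      rw [← add_div, div_eq_one_iff_eq hF]
      rw [oneSubPartials] at hzero
      linear_combination -hzero
    have him := congrArg Complex.im hsum
    rw [Complex.add_im, Complex.one_im] at him
    have hi : partialDiff i F z = 0 := by
      by_contra hi
      linarith [h.im_div_neg hz hi, h.im_div_nonpos j hz]
    have hj : partialDiff j F z = 0 := by
      by_contra hj
      linarith [h.im_div_neg hz hj, h.im_div_nonpos i hz]
    simp [hi, hj] at hsum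

theorem im_mul_conj_nonpos (h : IsStableExtension F f) (i : κ) {z : κ → ℂ}
    (hz : ∀ k, 0 ≤ (z k).im) : (partialDiff i F z * starRingEnd ℂ (F z)).im ≤ 0 := by
  let G : ℝ → ℝ := fun η =>
    (partialDiff i F (fun k => z k + η * Complex.I) *
      starRingEnd ℂ (F fun k => z k + η * Complex.I)).im
  have hG : Continuous G := by
    have hF := h.continuous
    have hi := continuous_partialDiff h.continuous i
    fun_prop
  have hpos : ∀ η ∈ Set.Ioi (0 : ℝ), G η ≤ 0 := fun η hη => by
    have hzη : ∀ k, 0 < (z k + η * Complex.I).im := fun k => by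
      simpa using add_pos_of_nonneg_of_pos (hz k) hη
    have hF := Complex.normSq_pos.2 (h.apply_ne_zero hzη)
    have := h.im_div_nonpos i hzη
    rw [div_eq_mul_inv, Complex.inv_def, ← mul_assoc,
      Complex.im_mul_ofReal] at this
    exact nonpos_of_mul_nonpos_left this (inv_pos.2 hF)
  have h0 : G 0 ≤ 0 := closure_minimal hpos (isClosed_le hG continuous_const)
    (by simp [closure_Ioi])
  simpa [G] using h0

protected theorem stronglyRayleigh (h : IsStableExtension F f) : StronglyRayleigh f where
  multiAffine a i s := by
    have := h.multiAffine (complexify a) i s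
    rw [← complexify_add_single, partialDiff_complexify h.apply_complexify] at this
    simp only [h.apply_complexify] at this
    exact_mod_cast this
  rayleighDiff_nonneg i j a := by
    have hz : ∀ k, 0 ≤ ((complexify a + Pi.single j Complex.I : κ → ℂ) k).im := fun k => by
      rcases eq_or_ne k j with rfl | hk
      · simp [complexify]
      · simp [complexify, hk]
    have him := h.im_mul_conj_nonpos i hz
    rw [h.multiAffine, h.multiAffine.partialDiff i, h.apply_complexify,
      partialDiff_complexify (partialDiff_complexify h.apply_complexify i),
      partialDiff_complexify h.apply_complexify,
      partialDiff_complexify h.apply_complexify, partialDiff_comm] at him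
    exact sub_nonneg.2 (by simpa [mul_comm] using him)

end IsStableExtension

protected theorem RealStable.oneSubPartials {f : (κ → ℝ) → ℝ} (h : RealStable f) (i j : κ) :
    RealStable (oneSubPartials i j f) :=
  h.imp' _ fun _ hF => hF.oneSubPartials i j

protected theorem RealStable.stronglyRayleigh {f : (κ → ℝ) → ℝ} (h : RealStable f) :
    StronglyRayleigh f :=
  h.elim fun _ hF => hF.stronglyRayleigh

protected theorem RealStable.sumMul {ι : Type*} [DecidableEq ι] {f : (ι → ℝ) → ℝ}
    {g : (κ → ℝ) → ℝ} (hf : RealStable f) (hg : RealStable g) : RealStable (sumMul f g) := by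
  obtain ⟨F, hF⟩ := hf
  obtain ⟨G, hG⟩ := hg
  refine ⟨sumMul F G, hF.multiAffine.sumMul hG.multiAffine, ?_, fun a => ?_, fun hz => ?_⟩
  · have := hF.continuous
    have := hG.continuous
    unfold sumMul
    fun_prop
  · exact (congrArg₂ (· * ·) (hF.apply_complexify _) (hG.apply_complexify _)).trans
      (Complex.ofReal_mul _ _).symm
  · exact mul_ne_zero (hF.apply_ne_zero fun i => hz _) (hG.apply_ne_zero fun k => hz _)

end RealStable

section Barrier

variable {κ : Type*} [DecidableEq κ] {f : (κ → ℝ) → ℝ} {a b : κ → ℝ}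

/-- The point `a` lies above the roots of `f`: the orthant with corner `a` contains none of them,
and `f` is positive there. -/
def PosAbove {κ : Type*} (f : (κ → ℝ) → ℝ) (a : κ → ℝ) : Prop := ∀ x, a ≤ x → 0 < f x

/-- The barrier function `Φᵢ = ∂ᵢf / f` of Batson, Marcus, Spielman and Srivastava. -/
noncomputable def barrier (i : κ) (f : (κ → ℝ) → ℝ) (x : κ → ℝ) : ℝ := partialDiff i f x / f x

theorem PosAbove.mono {κ : Type*} {f : (κ → ℝ) → ℝ} {a b : κ → ℝ} (ha : PosAbove f a)
    (hab : a ≤ b) : PosAbove f b :=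
  fun x hx => ha x (hab.trans hx)

theorem PosAbove.pos {κ : Type*} {f : (κ → ℝ) → ℝ} {a : κ → ℝ} (ha : PosAbove f a) : 0 < f a :=
  ha a le_rfl

theorem le_add_single (a : κ → ℝ) (i : κ) {s : ℝ} (hs : 0 ≤ s) : a ≤ a + Pi.single i s :=
  le_add_of_nonneg_right (Pi.single_nonneg.2 hs)

theorem le_add_single_add_single (a : κ → ℝ) (i j : κ) {s : ℝ} (hs : 0 ≤ s) :
    a ≤ a + (Pi.single i s + Pi.single j s) :=
  le_add_of_nonneg_right (add_nonneg (Pi.single_nonneg.2 hs) (Pi.single_nonneg.2 hs))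

theorem nonneg_of_forall_nonneg_add_mul {p q : ℝ} (h : ∀ s, 0 ≤ s → 0 ≤ p + s * q) :
    0 ≤ q := by
  by_contra! hq
  have hp : 0 ≤ p := by simpa using h 0 le_rfl
  have hs := h ((p + 1) / -q) (div_nonneg (by linarith) (by linarith))
  rw [div_mul_eq_mul_div, mul_div_assoc, div_neg, div_self hq.ne] at hs
  linarith

theorem PosAbove.partialDiff_nonneg (ha : PosAbove f a) (hf : MultiAffine f) (i : κ) :
    0 ≤ partialDiff i f a :=
  nonneg_of_forall_nonneg_add_mul fun s hs => hf a i s ▸ (ha _ (le_add_single a i hs)).le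

theorem PosAbove.partialDiff_partialDiff_nonneg (ha : PosAbove f a) (hf : MultiAffine f)
    (i j : κ) : 0 ≤ partialDiff i (partialDiff j f) a :=
  nonneg_of_forall_nonneg_add_mul fun s hs => hf.partialDiff j a i s ▸
    (ha.mono (le_add_single a i hs)).partialDiff_nonneg hf j

theorem MultiAffine.apply_sub_single (hf : MultiAffine f) (i : κ) (c : ℝ) {x : κ → ℝ}
    (hx : f x ≠ 0) : f (x - Pi.single i c) = f x * (1 - c * barrier i f x) := by
  rw [sub_eq_add_neg, ← Pi.single_neg, hf, barrier]
  field_simp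
  ring

theorem StronglyRayleigh.barrier_add_single_le (hf : StronglyRayleigh f) (ha : PosAbove f a)
    (i k : κ) {s : ℝ} (hs : 0 ≤ s) : barrier i f (a + Pi.single k s) ≤ barrier i f a := by
  have hΔ := mul_nonneg hs (hf.rayleighDiff_nonneg k i a)
  rw [barrier, barrier, div_le_div_iff₀ (ha _ (le_add_single a k hs)) ha.pos, hf.multiAffine,
    hf.multiAffine.partialDiff]
  rw [rayleighDiff] at hΔ
  linarith

theorem induction_sub_single [Finite κ] {P : (κ → ℝ) → Prop} {p q : κ → ℝ} (hpq : p ≤ q)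
    (hq : P q)
    (step : ∀ b k c, 0 ≤ c → p ≤ b - Pi.single k c → P b → P (b - Pi.single k c)) : P p := by
  cases nonempty_fintype κ
  suffices h : ∀ s : Finset κ, P (s.piecewise p q) by simpa using h Finset.univ
  intro s
  induction s using Finset.induction_on with
  | empty => simpa using hq
  | insert k s hk ih =>
    have hb : (insert k s).piecewise p q = s.piecewise p q - Pi.single k (q k - p k) := by
      ext j
      rcases eq_or_ne j k with rfl | hj
      · simp [hk]
      · simp [hj]
    rw [hb]
    refine step _ k _ (sub_nonneg.2 (hpq k)) ?_ ih
    rw [← hb]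
    exact Finset.le_piecewise_of_le_of_le _ le_rfl hpq

theorem StronglyRayleigh.barrier_le_of_le [Finite κ] (hf : StronglyRayleigh f)
    (ha : PosAbove f a) (hab : a ≤ b) (i : κ) : barrier i f b ≤ barrier i f a := by
  refine induction_sub_single (P := fun x => barrier i f b ≤ barrier i f x) hab le_rfl
    fun x k c hc hx hbx => hbx.trans ?_
  simpa using hf.barrier_add_single_le (ha.mono hx) i k hc

theorem StronglyRayleigh.posAbove_sub_single [Finite κ] (hf : StronglyRayleigh f)
    (ha : PosAbove f a) {k : κ} {c : ℝ} (hc : 0 ≤ c) (hpos : 0 < f (a - Pi.single k c)) :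
    PosAbove f (a - Pi.single k c) := by
  intro x hx
  have hax : a ≤ x + Pi.single k c := sub_le_iff_le_add.1 hx
  have hfx := ha _ hax
  have hΦ := mul_le_mul_of_nonneg_left (hf.barrier_le_of_le ha hax k) hc
  rw [hf.multiAffine.apply_sub_single k c ha.pos.ne'] at hpos
  have hlt := pos_of_mul_pos_right hpos ha.pos.le
  rw [← add_sub_cancel_right x (Pi.single k c), hf.multiAffine.apply_sub_single k c hfx.ne']
  exact mul_pos hfx (by linarith)

theorem barrier_oneSubPartials (i j k : κ) {x : κ → ℝ} (hx : f x ≠ 0)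
    (hT : oneSubPartials i j f x ≠ 0) :
    barrier k (oneSubPartials i j f) x = barrier k f x +
      (rayleighDiff k i f x + rayleighDiff k j f x) / (f x * oneSubPartials i j f x) := by
  rw [barrier, barrier, partialDiff_oneSubPartials]
  field_simp
  simp only [rayleighDiff, oneSubPartials]
  ring

theorem StronglyRayleigh.posAbove_of_oneSubPartials [Finite κ] (hf : StronglyRayleigh f)
    {i j : κ} (ha : PosAbove f a) {p : κ → ℝ} (hp : PosAbove (oneSubPartials i j f) p) :
    PosAbove f p := by
  refine induction_sub_single le_sup_left (ha.mono (le_sup_right (a := p))) ?_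
  intro b k c hc hpb hb
  have hTb : 0 < oneSubPartials i j f b :=
    hp b (hpb.trans (sub_le_self b (Pi.single_nonneg.2 hc)))
  have hTbc := hp _ hpb
  rw [(hf.multiAffine.oneSubPartials i j).apply_sub_single k c hTb.ne'] at hTbc
  have hΦ : barrier k f b ≤ barrier k (oneSubPartials i j f) b := by
    rw [barrier_oneSubPartials i j k hb.pos.ne' hTb.ne']
    have := hb.pos
    have := hf.rayleighDiff_nonneg k i b
    have := hf.rayleighDiff_nonneg k j b
    exact le_add_of_nonneg_right (by positivity)
  refine hf.posAbove_sub_single hb hc ?_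
  rw [hf.multiAffine.apply_sub_single k c hb.pos.ne']
  have := pos_of_mul_pos_right hTbc hTb.le
  exact mul_pos hb.pos (by linarith [mul_le_mul_of_nonneg_left hΦ hc])

theorem oneSubPartials_eq (i j : κ) {x : κ → ℝ} (hx : f x ≠ 0) :
    oneSubPartials i j f x = f x * (1 - (barrier i f x + barrier j f x)) := by
  rw [oneSubPartials, barrier, barrier]
  field_simp
  ring

theorem StronglyRayleigh.inv_mul_le_oneSubPartials [Finite κ] (hf : StronglyRayleigh f)
    {i j : κ} {δ : ℝ} (ha : PosAbove f a) (hΦ : barrier i f a + barrier j f a ≤ 1 - δ⁻¹)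
    {x : κ → ℝ} (hax : a ≤ x) : δ⁻¹ * f x ≤ oneSubPartials i j f x := by
  rw [oneSubPartials_eq i j (ha x hax).ne', mul_comm]
  refine mul_le_mul_of_nonneg_left ?_ (ha x hax).le
  linarith [hf.barrier_le_of_le ha hax i, hf.barrier_le_of_le ha hax j]

theorem StronglyRayleigh.posAbove_oneSubPartials [Finite κ] (hf : StronglyRayleigh f)
    {i j : κ} {δ : ℝ} (hδ : 0 < δ) (ha : PosAbove f a)
    (hΦ : barrier i f a + barrier j f a ≤ 1 - δ⁻¹) : PosAbove (oneSubPartials i j f) a :=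
  fun x hx => (mul_pos (inv_pos.2 hδ) (ha x hx)).trans_le
    (hf.inv_mul_le_oneSubPartials ha hΦ hx)

end Barrier

section Convexity

theorem coeff_of_quadratic_nonneg {a b c : ℝ} (h : ∀ s : ℝ, 0 ≤ a + 2 * b * s + c * s ^ 2) :
    0 ≤ a ∧ 0 ≤ c ∧ b ^ 2 ≤ a * c := by
  refine ⟨by simpa using h 0, nonneg_of_forall_nonneg_add_mul (p := a) fun s hs => ?_, ?_⟩
  · have h₁ := h (√s)
    have h₂ := h (-√s)
    rw [neg_sq, Real.sq_sqrt hs] at h₂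
    rw [Real.sq_sqrt hs] at h₁
    linarith
  · have hd := discrim_le_zero (a := c) (b := 2 * b) (c := a) fun s => by linarith [h s]
    rw [discrim] at hd
    linarith

/-- For quadratics `N` and `P` with `N / P` decreasing, the tangent to `N / P` at `δ` lies below
`N / P` at `0`; denominators are cleared. -/
theorem quadratic_div_convex {n₀ n₁ n₂ p₀ p₁ p₂ : ℝ} (hp₀ : 0 < p₀) (hp₁ : 0 ≤ p₁)
    (hp₂ : 0 ≤ p₂)
    (hW : ∀ s : ℝ, 0 ≤ (n₀ + n₁ * s + n₂ * s ^ 2) * (p₁ + 2 * p₂ * s) -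
      (n₁ + 2 * n₂ * s) * (p₀ + p₁ * s + p₂ * s ^ 2)) {δ : ℝ} (hδ : 0 ≤ δ) :
    (n₀ + n₁ * δ + n₂ * δ ^ 2) * (p₀ + p₁ * δ + p₂ * δ ^ 2) * p₀ +
        δ * ((n₀ + n₁ * δ + n₂ * δ ^ 2) * (p₁ + 2 * p₂ * δ) -
          (n₁ + 2 * n₂ * δ) * (p₀ + p₁ * δ + p₂ * δ ^ 2)) * p₀ ≤
      n₀ * (p₀ + p₁ * δ + p₂ * δ ^ 2) ^ 2 := by
  obtain ⟨a, ha⟩ : ∃ a, a = n₀ * p₁ - n₁ * p₀ := ⟨_, rfl⟩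
  obtain ⟨b, hb⟩ : ∃ b, b = n₀ * p₂ - n₂ * p₀ := ⟨_, rfl⟩
  obtain ⟨c, hc⟩ : ∃ c, c = n₁ * p₂ - n₂ * p₁ := ⟨_, rfl⟩
  obtain ⟨ha₀, hc₀, hbac⟩ : 0 ≤ a ∧ 0 ≤ c ∧ b ^ 2 ≤ a * c :=
    coeff_of_quadratic_nonneg fun s => (hW s).trans_eq (by rw [ha, hb, hc]; ring)
  have hrel : b * p₁ = a * p₂ + c * p₀ := by rw [ha, hb, hc]; ring
  have hb₀ : 0 ≤ b := by
    by_contra! hneg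
    have hcp : c * p₀ ≤ 0 := by
      linarith [mul_nonneg ha₀ hp₂, mul_nonpos_of_nonpos_of_nonneg hneg.le hp₁]
    have hc_zero : c = 0 := le_antisymm (nonpos_of_mul_nonpos_left hcp hp₀) hc₀
    rw [hc_zero, mul_zero] at hbac
    exact (sq_pos_of_neg hneg).not_ge hbac
  have hab : b * p₀ ≤ a * p₁ := by
    rcases hb₀.eq_or_lt with rfl | hpos
    · simpa using mul_nonneg ha₀ hp₁
    · refine le_of_mul_le_mul_left ?_ hpos
      have : b * (a * p₁) = b * (b * p₀) + (a ^ 2 * p₂ + (a * c - b ^ 2) * p₀) := by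
        linear_combination a * hrel
      have := mul_nonneg (sub_nonneg.2 hbac) hp₀.le
      nlinarith [mul_nonneg (sq_nonneg a) hp₂]
  have hgap : 0 ≤ δ ^ 2 * ((a * p₁ - b * p₀) + 2 * a * p₂ * δ + b * p₂ * δ ^ 2) := by
    have := sub_nonneg.2 hab
    positivity
  rw [← sub_nonneg]
  refine hgap.trans_eq ?_
  rw [ha, hb]
  ring

variable {κ : Type*} [DecidableEq κ] {f : (κ → ℝ) → ℝ} {a : κ → ℝ}

theorem MultiAffine.apply_add_single_add_single {R : Type*} [CommRing R] {F : (κ → R) → R}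
    (hF : MultiAffine F) (i j : κ) (x : κ → R) (s : R) :
    F (x + (Pi.single i s + Pi.single j s)) = F x + (partialDiff i F x + partialDiff j F x) * s +
      partialDiff i (partialDiff j F) x * s ^ 2 := by
  rw [← add_assoc, hF, hF, hF.partialDiff, partialDiff_comm]
  ring

theorem MultiAffine.partialDiff_add_single_self {R : Type*} [CommRing R] {F : (κ → R) → R}
    (hF : MultiAffine F) (i : κ) (x : κ → R) (s : R) :
    partialDiff i F (x + Pi.single i s) = partialDiff i F x := by
  rw [hF.partialDiff, hF.partialDiff_self, mul_zero, add_zero]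

theorem MultiAffine.partialDiff_add_partialDiff {R : Type*} [CommRing R] {F : (κ → R) → R}
    (hF : MultiAffine F) (i j : κ) (x : κ → R) (s : R) :
    partialDiff i F (x + (Pi.single i s + Pi.single j s)) +
        partialDiff j F (x + (Pi.single i s + Pi.single j s)) =
      partialDiff i F x + partialDiff j F x + 2 * partialDiff i (partialDiff j F) x * s := by
  rw [← add_assoc, hF.partialDiff_add_single_self j, add_right_comm,
    hF.partialDiff_add_single_self i, hF.partialDiff, hF.partialDiff, partialDiff_comm j i]
  ring

theorem rayleighDiff_add_rayleighDiff (i j k : κ) (f : (κ → ℝ) → ℝ) (x : κ → ℝ) :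
    rayleighDiff k i f x + rayleighDiff k j f x =
      partialDiff k f x * (partialDiff i f x + partialDiff j f x) -
        (partialDiff i (partialDiff k f) x + partialDiff j (partialDiff k f) x) * f x := by
  rw [rayleighDiff, rayleighDiff, partialDiff_comm k i, partialDiff_comm k j]
  ring

theorem StronglyRayleigh.barrier_add_le (hf : StronglyRayleigh f) (ha : PosAbove f a)
    (i j k : κ) {δ : ℝ} (hδ : 0 ≤ δ) {x : κ → ℝ} (hx : x = a + (Pi.single i δ + Pi.single j δ)) :
    barrier k f x + δ * (rayleighDiff k i f x + rayleighDiff k j f x) / f x ^ 2 ≤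
      barrier k f a := by
  have hax : a ≤ x := hx ▸ le_add_single_add_single a i j hδ
  have hf₁ := hf.multiAffine
  have hf₂ := hf₁.partialDiff k
  have hconv := quadratic_div_convex ha.pos
    (add_nonneg (ha.partialDiff_nonneg hf₁ i) (ha.partialDiff_nonneg hf₁ j))
    (ha.partialDiff_partialDiff_nonneg hf₁ i j)
    (n₀ := partialDiff k f a)
    (n₁ := partialDiff i (partialDiff k f) a + partialDiff j (partialDiff k f) a)
    (n₂ := partialDiff i (partialDiff j (partialDiff k f)) a)
    (fun s => by
      have := add_nonneg (hf.rayleighDiff_nonneg k i (a + (Pi.single i s + Pi.single j s)))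
        (hf.rayleighDiff_nonneg k j (a + (Pi.single i s + Pi.single j s)))
      rwa [rayleighDiff_add_rayleighDiff, hf₁.partialDiff_add_partialDiff,
        hf₂.partialDiff_add_partialDiff,
        hf₁.apply_add_single_add_single, hf₂.apply_add_single_add_single] at this) hδ
  rw [← hf₁.apply_add_single_add_single, ← hf₂.apply_add_single_add_single,
    ← hf₁.partialDiff_add_partialDiff, ← hf₂.partialDiff_add_partialDiff, ← hx,
    ← rayleighDiff_add_rayleighDiff] at hconv
  have hfx := ha x hax
  have hfa := ha.pos
  rw [barrier, barrier, div_add_div _ _ hfx.ne' (pow_ne_zero 2 hfx.ne'),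
    div_le_div_iff₀ (by positivity) hfa]
  linarith [mul_le_mul_of_nonneg_right hconv hfx.le]

theorem StronglyRayleigh.barrier_oneSubPartials_le [Finite κ] (hf : StronglyRayleigh f)
    (ha : PosAbove f a) {i j : κ} {δ : ℝ} (hδ : 0 < δ)
    (hΦ : barrier i f a + barrier j f a ≤ 1 - δ⁻¹) (k : κ) :
    barrier k (oneSubPartials i j f) (a + (Pi.single i δ + Pi.single j δ)) ≤ barrier k f a := by
  obtain ⟨x, hx⟩ : ∃ x, x = a + (Pi.single i δ + Pi.single j δ) := ⟨_, rfl⟩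
  have hax : a ≤ x := hx ▸ le_add_single_add_single a i j hδ.le
  have hfx := ha x hax
  have hTx := hf.posAbove_oneSubPartials hδ ha hΦ x hax
  have hle := hf.inv_mul_le_oneSubPartials ha hΦ hax
  refine le_trans ?_ (hf.barrier_add_le ha i j k hδ.le hx)
  rw [← hx, barrier_oneSubPartials i j k hfx.ne' hTx.ne']
  gcongr _ + ?_
  have := hf.rayleighDiff_nonneg k i x
  have := hf.rayleighDiff_nonneg k j x
  rw [div_le_div_iff₀ (by positivity) (by positivity)]
  have : f x ≤ δ * oneSubPartials i j f x := by rwa [inv_mul_le_iff₀ hδ] at hle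
  calc (rayleighDiff k i f x + rayleighDiff k j f x) * f x ^ 2
      = (rayleighDiff k i f x + rayleighDiff k j f x) * f x * f x := by ring
    _ ≤ (rayleighDiff k i f x + rayleighDiff k j f x) * f x *
        (δ * oneSubPartials i j f x) := by gcongr
    _ = _ := by ring

end Convexity

section Rounding

variable {ι κ : Type*} [DecidableEq κ] [Finite κ]

theorem StronglyRayleigh.posAbove_sub_single_or {f : (κ → ℝ) → ℝ} (hf : StronglyRayleigh f)
    {α β : ℝ} (hα : 0 < α) (hβ : 0 < β) (hαβ : α + β = 1) {i j : κ} {p : κ → ℝ}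
    (hp : PosAbove f p) (hT : 0 < oneSubPartials i j f p) :
    PosAbove f (p - Pi.single i α⁻¹) ∨ PosAbove f (p - Pi.single j β⁻¹) := by
  have hsplit : oneSubPartials i j f p =
      α * f (p - Pi.single i α⁻¹) + β * f (p - Pi.single j β⁻¹) := by
    rw [hf.multiAffine.apply_sub_single i α⁻¹ hp.pos.ne',
      hf.multiAffine.apply_sub_single j β⁻¹ hp.pos.ne', oneSubPartials_eq i j hp.pos.ne']
    field_simp
    linear_combination -f p * hαβ
  rw [hsplit] at hT
  by_cases hi : 0 < f (p - Pi.single i α⁻¹)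
  · exact .inl (hf.posAbove_sub_single hp (inv_nonneg.2 hα.le) hi)
  · refine .inr (hf.posAbove_sub_single hp (inv_nonneg.2 hβ.le) ?_)
    have := mul_nonpos_of_nonneg_of_nonpos hα.le (not_lt.1 hi)
    exact pos_of_mul_pos_right (by linarith) hβ.le

theorem RealStable.exists_posAbove [DecidableEq ι] (z w : ι → κ) {α β δ : ℝ} (hα : 0 < α)
    (hβ : 0 < β) (hαβ : α + β = 1) (hδ : 0 < δ) (A : Finset ι) {f : (κ → ℝ) → ℝ} {a : κ → ℝ}
    (hf : RealStable f) (ha : PosAbove f a)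
    (hΦ : ∀ i ∈ A, barrier (z i) f a + barrier (w i) f a ≤ 1 - δ⁻¹) :
    ∃ S ⊆ A, PosAbove f (a + ∑ i ∈ A, (Pi.single (z i) δ + Pi.single (w i) δ) -
      ∑ i ∈ A, if i ∈ S then Pi.single (z i) α⁻¹ else Pi.single (w i) β⁻¹) := by
  induction A using Finset.induction_on generalizing f a with
  | empty => exact ⟨∅, subset_rfl, by simpa using ha⟩
  | insert i A hi ih =>
    have hR := hf.stronglyRayleigh
    have hΦi := hΦ i (Finset.mem_insert_self i A)
    have haT : PosAbove (oneSubPartials (z i) (w i) f)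
        (a + (Pi.single (z i) δ + Pi.single (w i) δ)) :=
      (hR.posAbove_oneSubPartials hδ ha hΦi).mono (le_add_single_add_single a _ _ hδ.le)
    obtain ⟨S, hSA, hS⟩ := ih (hf.oneSubPartials (z i) (w i)) haT fun j hj =>
      (add_le_add (hR.barrier_oneSubPartials_le ha hδ hΦi _)
        (hR.barrier_oneSubPartials_le ha hδ hΦi _)).trans (hΦ j (Finset.mem_insert_of_mem hj))
    have hiS : i ∉ S := fun h => hi (hSA h)
    rcases hR.posAbove_sub_single_or hα hβ hαβ (hR.posAbove_of_oneSubPartials ha hS) hS.pos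
      with h | h
    · refine ⟨insert i S, Finset.insert_subset_insert i hSA, ?_⟩
      have hsum : (∑ j ∈ A, if j ∈ insert i S then Pi.single (z j) α⁻¹ else
          Pi.single (w j) β⁻¹ : κ → ℝ) =
          ∑ j ∈ A, if j ∈ S then Pi.single (z j) α⁻¹ else Pi.single (w j) β⁻¹ :=
        Finset.sum_congr rfl fun j hj => by
          simp [Finset.mem_insert, ne_of_mem_of_not_mem hj hi]
      rw [Finset.sum_insert hi, Finset.sum_insert hi, hsum, if_pos (Finset.mem_insert_self i S)]
      convert h using 1
      abel
    · refine ⟨S, hSA.trans (Finset.subset_insert i A), ?_⟩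
      rw [Finset.sum_insert hi, Finset.sum_insert hi, if_neg hiS]
      convert h using 1
      abel

end Rounding

section Determinant

open Matrix ComplexOrder

variable {ι n : Type*}

theorem det_add_smul_vecMulVec [Fintype n] [DecidableEq n] {R : Type*} [CommRing R]
    (M : Matrix n n R) (a b : n → R) (s : R) :
    (M + s • vecMulVec a b).det = M.det + s * ((M + vecMulVec a b).det - M.det) := by
  -- By a Schur complement, the rank one term only enters one row of a larger determinant.
  let X : Matrix (n ⊕ Unit) (n ⊕ Unit) R := fromBlocks M (replicateCol Unit (-a)) 0 1
  have hX : X.det = M.det := by simp [X, det_fromBlocks_one₂₂]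
  have hrow (r : R) : (M + r • vecMulVec a b).det =
      M.det + r * (X.updateRow (Sum.inr ()) (Sum.elim b 0)).det := by
    have hschur : M + r • vecMulVec a b =
        M - replicateCol Unit (-a) * (r • replicateRow Unit b) := by
      rw [Matrix.mul_smul, ← vecMulVec_eq, neg_vecMulVec, smul_neg, sub_neg_eq_add]
    have hblock : fromBlocks M (replicateCol Unit (-a)) (r • replicateRow Unit b) 1 =
        X.updateRow (Sum.inr ()) (X (Sum.inr ()) + r • Sum.elim b 0) := by
      ext (i | i) (j | j) <;> simp [X, updateRow_apply]
    rw [hschur, ← det_fromBlocks_one₂₂, hblock, det_updateRow_add, det_updateRow_smul,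
      updateRow_eq_self, hX]
  rw [hrow, ← one_smul R (vecMulVec a b), hrow]
  ring

/-- The Hermitian pencil `∑ zᵢ vᵢvᵢ*`. -/
def pencil [Fintype ι] (v : ι → n → ℂ) (z : ι → ℂ) : Matrix n n ℂ :=
  ∑ i, z i • vecMulVec (v i) (star (v i))

/-- The determinant of `∑ aᵢ vᵢvᵢ*`, a real number for real `a`. -/
noncomputable def detPencil [Fintype ι] [Fintype n] [DecidableEq n] (v : ι → n → ℂ)
    (a : ι → ℝ) : ℝ :=
  (pencil v (complexify a)).det.re

variable [Fintype ι] {v : ι → n → ℂ}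

theorem pencil_add_single [DecidableEq ι] (v : ι → n → ℂ) (z : ι → ℂ) (i : ι) (s : ℂ) :
    pencil v (z + Pi.single i s) = pencil v z + s • vecMulVec (v i) (star (v i)) := by
  simp [pencil, add_smul, Finset.sum_add_distrib, Pi.single_apply, ite_smul]

theorem pencil_smul (v : ι → n → ℂ) (c : ℂ) (z : ι → ℂ) : pencil v (c • z) = c • pencil v z := by
  simp [pencil, Finset.smul_sum, mul_smul]

theorem pencil_complexify_const [DecidableEq n] (hv : pencil v 1 = 1) (x : ℝ) :
    pencil v (complexify fun _ => x) = (x : ℂ) • 1 := by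
  rw [← hv, ← pencil_smul]
  congr 1
  ext i
  simp [complexify]

theorem isHermitian_pencil (v : ι → n → ℂ) (a : ι → ℝ) :
    (pencil v (complexify a)).IsHermitian := by
  simp [IsHermitian, pencil, complexify, conjTranspose_sum, conjTranspose_vecMulVec]

variable [Fintype n]

theorem dotProduct_pencil_mulVec (v : ι → n → ℂ) (z : ι → ℂ) (x : n → ℂ) :
    star x ⬝ᵥ (pencil v z *ᵥ x) = ∑ i, z i * Complex.normSq (star (v i) ⬝ᵥ x) := by
  simp only [pencil, sum_mulVec, dotProduct_sum, smul_mulVec, dotProduct_smul, smul_eq_mul,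
    vecMulVec_mulVec, op_smul_eq_smul]
  refine Finset.sum_congr rfl fun i _ => ?_
  rw [Complex.normSq_eq_conj_mul_self, starRingEnd_apply, ← star_dotProduct_star, star_star,
    dotProduct_comm (star x), mul_comm (v i ⬝ᵥ star x)]

theorem exists_dotProduct_ne_zero (hv : (pencil v 1).PosDef) {x : n → ℂ} (hx : x ≠ 0) :
    ∃ i, star (v i) ⬝ᵥ x ≠ 0 := by
  by_contra! hzero
  have hpos := hv.dotProduct_mulVec_pos hx
  simp [dotProduct_pencil_mulVec, hzero] at hpos

theorem ofReal_detPencil [DecidableEq n] (v : ι → n → ℂ) (a : ι → ℝ) :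
    (detPencil v a : ℂ) = (pencil v (complexify a)).det := by
  rw [detPencil, ← Complex.conj_eq_iff_re]
  have := congrArg det (isHermitian_pencil v a)
  rwa [det_conjTranspose] at this

theorem detPencil_const [DecidableEq n] (hv : pencil v 1 = 1) (x : ℝ) :
    detPencil v (fun _ => x) = x ^ Fintype.card n := by
  rw [detPencil, pencil_complexify_const hv, det_smul, det_one, mul_one]
  exact_mod_cast Complex.ofReal_re _

theorem det_pencil_ne_zero [DecidableEq n] (hv : (pencil v 1).PosDef) {z : ι → ℂ}
    (hz : ∀ i, 0 < (z i).im) : (pencil v z).det ≠ 0 := by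
  intro hdet
  obtain ⟨x, hx, hzx⟩ := exists_mulVec_eq_zero_iff.2 hdet
  obtain ⟨i, hi⟩ := exists_dotProduct_ne_zero hv hx
  have him := congrArg Complex.im (dotProduct_pencil_mulVec v z x)
  simp only [hzx, dotProduct_zero, Complex.im_sum, Complex.im_mul_ofReal, Complex.zero_im] at him
  refine him.not_lt (Finset.sum_pos' (fun j _ => ?_) ⟨i, Finset.mem_univ i, ?_⟩)
  · exact mul_nonneg (hz j).le (Complex.normSq_nonneg _)
  · exact mul_pos (hz i) (Complex.normSq_pos.2 hi)

theorem detPencil_pos [DecidableEq n] (hv : (pencil v 1).PosDef) {a : ι → ℝ}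
    (ha : ∀ i, 0 < a i) : 0 < detPencil v a := by
  have hdef : (pencil v (complexify a)).PosDef := by
    refine .of_dotProduct_mulVec_pos (isHermitian_pencil v a) fun x hx => ?_
    obtain ⟨i, hi⟩ := exists_dotProduct_ne_zero hv hx
    rw [dotProduct_pencil_mulVec]
    refine Finset.sum_pos' (fun j _ => ?_) ⟨i, Finset.mem_univ i, ?_⟩
    · exact mul_nonneg (Complex.zero_le_real.2 (ha j).le)
        (Complex.zero_le_real.2 (Complex.normSq_nonneg _))
    · exact mul_pos (Complex.zero_lt_real.2 (ha i))
        (Complex.zero_lt_real.2 (Complex.normSq_pos.2 hi))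
  have := hdef.det_pos
  rw [← ofReal_detPencil] at this
  exact_mod_cast this

variable [DecidableEq ι] [DecidableEq n]

theorem realStable_detPencil (hv : (pencil v 1).PosDef) : RealStable (detPencil v) := by
  refine ⟨fun z => (pencil v z).det, fun z i s => ?_, ?_, fun a => (ofReal_detPencil v a).symm,
    det_pencil_ne_zero hv⟩
  · simp only [partialDiff, pencil_add_single, det_add_smul_vecMulVec _ _ _ s, one_smul]
  · unfold pencil
    fun_prop

theorem barrier_detPencil_const (hv : pencil v 1 = 1) {x : ℝ} (hx : 0 < x) (i : ι) :
    barrier i (detPencil v) (fun _ => x) = (star (v i) ⬝ᵥ v i).re / x := by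
  have hx' : (x : ℂ) ≠ 0 := Complex.ofReal_ne_zero.2 hx.ne'
  have hshift : pencil v (complexify ((fun _ => x) + Pi.single i 1)) =
      (x : ℂ) • (1 + replicateCol Unit ((x : ℂ)⁻¹ • v i) * replicateRow Unit (star (v i))) := by
    rw [complexify_add_single, pencil_add_single, pencil_complexify_const hv, smul_add,
      ← vecMulVec_eq, smul_vecMulVec, smul_inv_smul₀ hx', Complex.ofReal_one, one_smul]
  rw [barrier, partialDiff, detPencil_const hv, detPencil, hshift, det_smul,
    det_one_add_replicateCol_mul_replicateRow, dotProduct_smul, ← Complex.ofReal_pow,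
    Complex.re_ofReal_mul, smul_eq_mul, ← Complex.ofReal_inv, Complex.add_re,
    Complex.re_ofReal_mul, Complex.one_re]
  field_simp
  ring

end Determinant

section SumMulBarrier

variable {ι κ : Type*} {f : (ι → ℝ) → ℝ} {g : (κ → ℝ) → ℝ} {p : ι ⊕ κ → ℝ}

protected theorem PosAbove.sumMul (hf : PosAbove f (p ∘ Sum.inl)) (hg : PosAbove g (p ∘ Sum.inr)) :
    PosAbove (sumMul f g) p :=
  fun _ hx => mul_pos (hf _ fun i => hx (Sum.inl i)) (hg _ fun k => hx (Sum.inr k))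

theorem PosAbove.of_sumMul_left {b : κ → ℝ} (hp : PosAbove (sumMul f g) p)
    (hg : PosAbove g b) : PosAbove f (p ∘ Sum.inl) := by
  intro x hx
  have h := hp (Sum.elim x (p ∘ Sum.inr ⊔ b)) <| by
    rintro (i | k)
    · exact hx i
    · exact le_sup_left (a := p (Sum.inr k))
  exact pos_of_mul_pos_left h (hg _ le_sup_right).le

theorem PosAbove.of_sumMul_right {b : ι → ℝ} (hp : PosAbove (sumMul f g) p)
    (hf : PosAbove f b) : PosAbove g (p ∘ Sum.inr) := by
  intro x hx
  have h := hp (Sum.elim (p ∘ Sum.inl ⊔ b) x) <| by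
    rintro (i | k)
    · exact le_sup_left (a := p (Sum.inl i))
    · exact hx k
  exact pos_of_mul_pos_right h (hf _ le_sup_right).le

variable [DecidableEq ι] [DecidableEq κ]

theorem barrier_sumMul_inl (hg : g (p ∘ Sum.inr) ≠ 0) (i : ι) :
    barrier (Sum.inl i) (sumMul f g) p = barrier i f (p ∘ Sum.inl) := by
  rw [barrier, partialDiff_sumMul_inl, sumMul, mul_div_mul_right _ _ hg, barrier]

theorem barrier_sumMul_inr (hf : f (p ∘ Sum.inl) ≠ 0) (k : κ) :
    barrier (Sum.inr k) (sumMul f g) p = barrier k g (p ∘ Sum.inr) := by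
  rw [barrier, partialDiff_sumMul_inr, sumMul, mul_div_mul_left _ _ hf, barrier]

theorem RealStable.exists_finset_posAbove [Fintype ι] {a : ι → ℝ} {α β δ : ℝ} (hf : RealStable f)
    (hα : 0 < α) (hβ : 0 < β) (hαβ : α + β = 1) (hδ : 0 < δ) (ha : PosAbove f a)
    (hΦ : ∀ i, 2 * barrier i f a ≤ 1 - δ⁻¹) :
    ∃ S : Finset ι, PosAbove f (fun i => a i + δ - if i ∈ S then α⁻¹ else 0) ∧
      PosAbove f (fun i => a i + δ - if i ∈ Sᶜ then β⁻¹ else 0) := by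
  obtain ⟨S, -, hS⟩ := (hf.sumMul hf).exists_posAbove Sum.inl Sum.inr hα hβ hαβ hδ Finset.univ
    (PosAbove.sumMul (p := Sum.elim a a) ha ha) fun i _ => by
      rw [barrier_sumMul_inl (by exact ha.pos.ne'), barrier_sumMul_inr (by exact ha.pos.ne'),
        Sum.elim_comp_inl, Sum.elim_comp_inr, ← two_mul]
      exact hΦ i
  refine ⟨S, ?_, ?_⟩
  · convert hS.of_sumMul_left ha using 2 with i
    simp [Finset.sum_apply, Pi.single_apply, ite_apply]
  · convert hS.of_sumMul_right ha using 2 with i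
    rw [Finset.sum_ite]
    simp [Finset.sum_apply, Pi.single_apply, ite_not]

end SumMulBarrier

section Partition

open Matrix ComplexOrder

variable {ι n : Type*} [Fintype ι] [DecidableEq n] {v : ι → n → ℂ}

theorem pencil_complexify_sub_ite [DecidableEq ι] (hv : pencil v 1 = 1) (S : Finset ι) (c s : ℝ) :
    pencil v (complexify fun i => c - if i ∈ S then s else 0) =
      (c : ℂ) • 1 - (s : ℂ) • ∑ i ∈ S, vecMulVec (v i) (star (v i)) := by
  rw [← pencil_complexify_const hv, pencil, pencil, Finset.smul_sum, ← Finset.univ_inter S,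
    ← Finset.sum_ite_mem, Finset.univ_inter, ← Finset.sum_sub_distrib]
  refine Finset.sum_congr rfl fun i _ => ?_
  split_ifs <;> simp [complexify, sub_smul, *]

variable [Fintype n]

theorem posAbove_detPencil_const (hv : pencil v 1 = 1) {x : ℝ} (hx : 0 < x) :
    PosAbove (detPencil v) fun _ => x := fun _ hy =>
  detPencil_pos (hv ▸ PosDef.one) fun i => hx.trans_le (hy i)

variable [DecidableEq ι]

theorem exists_posAbove_detPencil (hv : pencil v 1 = 1) {ε : ℝ} (hε : 0 < ε)
    (hvε : ∀ i, (star (v i) ⬝ᵥ v i).re ≤ ε) {t : ℝ} (ht₀ : 0 < t) (ht₁ : t < 1) :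
    ∃ S : Finset ι,
      PosAbove (detPencil v) (fun i => (1 + √(2 * ε)) ^ 2 - if i ∈ S then t⁻¹ else 0) ∧
      PosAbove (detPencil v) (fun i => (1 + √(2 * ε)) ^ 2 - if i ∈ Sᶜ then (1 - t)⁻¹ else 0) := by
  obtain ⟨r, hr⟩ : ∃ r, r = √(2 * ε) := ⟨_, rfl⟩
  have hr₀ : 0 < r := hr ▸ Real.sqrt_pos.2 (by positivity)
  have hr_sq : r ^ 2 = 2 * ε := hr ▸ Real.sq_sqrt (by positivity)
  have hx₀ : 0 < r + r ^ 2 := by positivity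
  have hΦ (i : ι) : 2 * barrier i (detPencil v) (fun _ => r + r ^ 2) ≤ 1 - (1 + r)⁻¹ := by
    rw [barrier_detPencil_const hv hx₀]
    calc 2 * ((star (v i) ⬝ᵥ v i).re / (r + r ^ 2)) ≤ 2 * (ε / (r + r ^ 2)) := by
          gcongr
          exact hvε i
      _ = r ^ 2 / (r + r ^ 2) := by rw [hr_sq]; ring
      _ = 1 - (1 + r)⁻¹ := by field_simp; ring
  have hsq : r + r ^ 2 + (1 + r) = (1 + √(2 * ε)) ^ 2 := by rw [← hr]; ring
  simpa only [hsq] using (realStable_detPencil (hv ▸ PosDef.one)).exists_finset_posAbove ht₀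
    (sub_pos.2 ht₁) (add_sub_cancel t 1) (by positivity : 0 < 1 + r)
    (posAbove_detPencil_const hv hx₀) hΦ

theorem det_smul_one_sub_sum_ne_zero (hv : pencil v 1 = 1) {S : Finset ι} {t c : ℝ}
    (ht₀ : 0 < t) (ht₁ : t ≤ 1) (hc : 1 ≤ c)
    (hS : PosAbove (detPencil v) fun i => c - if i ∈ S then t⁻¹ else 0) {y : ℝ}
    (hy : t + (c - 1) < y) :
    ((y : ℂ) • 1 - ∑ i ∈ S, vecMulVec (v i) (star (v i))).det ≠ 0 := by
  have hle : c ≤ t⁻¹ * y := by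
    rw [inv_mul_eq_div, le_div_iff₀ ht₀]
    nlinarith [mul_nonneg (sub_nonneg.2 hc) (sub_nonneg.2 ht₁)]
  have hpos := hS (fun i => t⁻¹ * y - if i ∈ S then t⁻¹ else 0) fun i => sub_le_sub_right hle _
  rw [detPencil, pencil_complexify_sub_ite hv, Complex.ofReal_mul, mul_smul, ← smul_sub,
    det_smul] at hpos
  intro hdet
  rw [hdet, mul_zero, Complex.zero_re] at hpos
  exact hpos.false

end Partition

section OperatorNorm

open Matrix

variable {d : ℕ}

theorem opNorm_le_of_det_ne_zero {M : Matrix (Fin d) (Fin d) ℂ} (hM : M.IsHermitian) {c : ℝ}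
    (hc : 0 ≤ c) (h : ∀ x : ℝ, c < |x| → ((x : ℂ) • 1 - M).det ≠ 0) : opNorm M ≤ c := by
  lift c to NNReal using hc
  have hsa : IsSelfAdjoint (toEuclideanCLM (n := Fin d) (𝕜 := ℂ) M) :=
    IsSelfAdjoint.map (f := toEuclideanCLM (n := Fin d) (𝕜 := ℂ)) hM
  have hradius : spectralRadius ℂ (toEuclideanCLM (n := Fin d) (𝕜 := ℂ) M) ≤ c := by
    refine iSup₂_le fun μ hμ => ?_
    have hreal := hsa.mem_spectrum_eq_re hμ
    rw [AlgEquiv.spectrum_eq, hreal, spectrum.mem_iff, Algebra.algebraMap_eq_smul_one,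
      isUnit_iff_isUnit_det, isUnit_iff_ne_zero] at hμ
    have hle := not_lt.1 (mt (h μ.re) hμ)
    rw [hreal]
    exact_mod_cast hle
  rw [hsa.spectralRadius_eq_nnnorm] at hradius
  exact_mod_cast hradius

theorem opNorm_smul_one_le (s : ℂ) : opNorm (s • (1 : Matrix (Fin d) (Fin d) ℂ)) ≤ ‖s‖ := by
  rw [opNorm, map_smul, map_one, norm_smul]
  exact mul_le_of_le_one_right (norm_nonneg s) ContinuousLinearMap.norm_id_le

theorem opNorm_zero : opNorm (0 : Matrix (Fin d) (Fin d) ℂ) = 0 := by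
  rw [opNorm, map_zero, norm_zero]

theorem outer_eq_vecMulVec (u : EuclideanSpace ℂ (Fin d)) : outer u = vecMulVec u (star ⇑u) :=
  rfl

theorem isHermitian_outer (u : EuclideanSpace ℂ (Fin d)) : (outer u).IsHermitian := by
  rw [outer_eq_vecMulVec, IsHermitian, conjTranspose_vecMulVec, star_star]

theorem outer_zero : outer (0 : EuclideanSpace ℂ (Fin d)) = 0 := by
  rw [outer_eq_vecMulVec]
  exact zero_vecMulVec _

theorem re_star_dotProduct_self (u : EuclideanSpace ℂ (Fin d)) :
    (star ⇑u ⬝ᵥ ⇑u).re = ‖u‖ ^ 2 := by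
  rw [dotProduct_comm, ← EuclideanSpace.inner_eq_star_dotProduct, inner_self_eq_norm_sq_to_K]
  norm_cast

variable {ι : Type*} {u : ι → EuclideanSpace ℂ (Fin d)}

theorem sum_outer_eq_zero_of_norm_sq_nonpos (h : ∀ i, ‖u i‖ ^ 2 ≤ 0) (S : Finset ι) :
    ∑ i ∈ S, outer (u i) = 0 :=
  Finset.sum_eq_zero fun i _ => by
    rw [norm_eq_zero.1 (pow_eq_zero_iff two_ne_zero |>.1 ((h i).antisymm (sq_nonneg _))),
      outer_zero]

theorem exists_opNorm_sum_outer_sub_le [Fintype ι] (hu : ∑ i, outer (u i) = 1) {ε t : ℝ}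
    (hε : 0 < ε) (huε : ∀ i, ‖u i‖ ^ 2 ≤ ε) (ht₀ : 0 < t) (ht₁ : t < 1) :
    ∃ S : Finset ι, opNorm (∑ i ∈ S, outer (u i) - (t : ℂ) • 1) ≤
      (1 + √(2 * ε)) ^ 2 - 1 := by
  classical
  have hv : pencil (fun i => ⇑(u i)) 1 = 1 := by
    simpa only [pencil, Pi.one_apply, one_smul, outer_eq_vecMulVec] using hu
  obtain ⟨S, hS, hSc⟩ := exists_posAbove_detPencil hv hε
    (fun i => (re_star_dotProduct_self (u i)).trans_le (huε i)) ht₀ ht₁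
  have hc : 1 ≤ (1 + √(2 * ε)) ^ 2 := one_le_pow₀ (le_add_of_nonneg_right (Real.sqrt_nonneg _))
  have hM : (∑ i ∈ S, outer (u i) - (t : ℂ) • 1).IsHermitian := by
    refine (isSelfAdjoint_sum S fun i _ => isHermitian_outer (u i)).sub ?_
    exact IsSelfAdjoint.smul (Complex.conj_ofReal t) (.one _)
  refine ⟨S, opNorm_le_of_det_ne_zero hM (sub_nonneg.2 hc) fun x hx => ?_⟩
  rcases lt_abs.1 hx with hx | hx
  · have hdet := det_smul_one_sub_sum_ne_zero hv ht₀ ht₁.le hc hS (y := x + t) (by linarith)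
    have hshift : (x : ℂ) • 1 - (∑ i ∈ S, outer (u i) - (t : ℂ) • 1) =
        ((x + t : ℝ) : ℂ) • 1 - ∑ i ∈ S, outer (u i) := by
      push_cast
      module
    rwa [hshift]
  · have hdet := det_smul_one_sub_sum_ne_zero hv (sub_pos.2 ht₁) (sub_le_self 1 ht₀.le) hc hSc
      (y := 1 - t - x) (by linarith)
    have hcompl : ∑ i ∈ Sᶜ, outer (u i) = 1 - ∑ i ∈ S, outer (u i) :=
      eq_sub_of_add_eq (hu ▸ Finset.sum_compl_add_sum S _)
    have hneg : (x : ℂ) • 1 - (∑ i ∈ S, outer (u i) - (t : ℂ) • 1) =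
        -(((1 - t - x : ℝ) : ℂ) • 1 - ∑ i ∈ Sᶜ, outer (u i)) := by
      rw [hcompl]
      push_cast
      module
    rw [hneg, det_neg]
    exact mul_ne_zero (pow_ne_zero _ (neg_ne_zero.2 one_ne_zero)) hdet

end OperatorNorm

theorem one_add_sqrt_two_mul_sq_sub_one_le {ε : ℝ} (hε₀ : 0 ≤ ε) (hε₁ : ε ≤ 1) :
    (1 + √(2 * ε)) ^ 2 - 1 ≤ 5 * √ε := by
  have hε_sqrt : ε ≤ √ε := Real.le_sqrt_of_sq_le (pow_le_of_le_one hε₀ hε₁ two_ne_zero)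
  have hsqrt₂ : 2 * √2 ≤ 3 := by
    rw [← le_div_iff₀' two_pos, Real.sqrt_le_left (by norm_num)]
    norm_num
  calc (1 + √(2 * ε)) ^ 2 - 1 = 2 * √2 * √ε + 2 * ε := by
        rw [add_sq, Real.sq_sqrt (by positivity), Real.sqrt_mul zero_le_two]
        ring
    _ ≤ 3 * √ε + 2 * √ε := by gcongr
    _ = 5 * √ε := by ring

/-- There is a universal constant `C > 0` such that whenever `∑ uᵢuᵢ* = I`,
`‖uᵢ‖² ≤ ε` for all `i`, and `t ∈ [0,1]`, there is a set of indices `S` with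
`‖∑_{i ∈ S} uᵢuᵢ* − t I‖ ≤ C √ε`. -/
theorem stmt3 :
    ∃ C : ℝ, 0 < C ∧
      ∀ (d m : ℕ) (ε : ℝ) (u : Fin m → EuclideanSpace ℂ (Fin d)),
        (∑ i, outer (u i) = 1) →
        (∀ i, ‖u i‖ ^ 2 ≤ ε) →
        ∀ t : ℝ, 0 ≤ t → t ≤ 1 →
          ∃ S : Finset (Fin m),
            opNorm ((∑ i ∈ S, outer (u i)) - (t : ℂ) • 1) ≤ C * Real.sqrt ε := by
  refine ⟨5, by norm_num, fun d m ε u hu huε t ht₀ ht₁ => ?_⟩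
  have hC : 0 ≤ 5 * √ε := by positivity
  rcases le_or_gt ε 0 with hε₀ | hε₀
  · have hone := sum_outer_eq_zero_of_norm_sq_nonpos (fun i => (huε i).trans hε₀) Finset.univ
    exact ⟨∅, by rwa [← hu, hone, Finset.sum_empty, smul_zero, sub_zero, opNorm_zero]⟩
  rcases ht₀.eq_or_lt with rfl | ht₀
  · exact ⟨∅, by rwa [Finset.sum_empty, Complex.ofReal_zero, zero_smul, sub_zero, opNorm_zero]⟩
  rcases ht₁.eq_or_lt with rfl | ht₁
  · exact ⟨Finset.univ, by rwa [hu, Complex.ofReal_one, one_smul, sub_self, opNorm_zero]⟩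
  rcases le_or_gt ε 1 with hε₁ | hε₁
  · obtain ⟨S, hS⟩ := exists_opNorm_sum_outer_sub_le hu hε₀ huε ht₀ ht₁
    exact ⟨S, hS.trans (one_add_sqrt_two_mul_sq_sub_one_le hε₀.le hε₁)⟩
  · refine ⟨∅, ?_⟩
    rw [Finset.sum_empty, zero_sub, ← neg_smul]
    refine (opNorm_smul_one_le _).trans ?_
    rw [norm_neg, Complex.norm_of_nonneg ht₀.le]
    linarith [Real.one_le_sqrt.2 hε₁.le]
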